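/- For every nonnegative integer n, there exist integers x, y, z such that n = p_3(x) + p_5(y) + p_11(z), where p_3(x) = (x² + x)/2, p_5(y) = (3y² − y)/2, and p_11(z) = (9z² − 7z)/2. In other words, the sum p_3 + p_5 + p_11 is universal over ℤ. -/

import Mathlib

/-- Generalized triangular number: `p₃(x) = (x² + x)/2`. -/
def p3 (x : ℤ) : ℤ := (x ^ 2 + x) / 2

/-- Generalized pentagonal number: `p₅(x) = (3x² − x)/2`. -/
def p5 (x : ℤ) : ℤ := (3 * x ^ 2 - x) / 2

/-- Generalized hendecagonal number: `p₁₁(x) = (9x² − 7x)/2`. -/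
def p11 (x : ℤ) : ℤ := (9 * x ^ 2 - 7 * x) / 2

/-- A ternary quadratic form given by its coefficients. -/
def tform (a b c r s t x y z : ℤ) : ℤ :=
  a * x ^ 2 + b * y ^ 2 + c * z ^ 2 + 2 * r * y * z + 2 * s * x * z + 2 * t * x * y

/-- Positive definite, determinant 3, represents `N`, does not represent 6. -/
def Good (N a b c r s t : ℤ) : Prop :=
  0 < a ∧ 0 < a * b - t ^ 2 ∧
  a * b * c + 2 * r * s * t - a * r ^ 2 - b * s ^ 2 - c * t ^ 2 = 3 ∧
  (∃ x y z, tform a b c r s t x y z = N) ∧ ∀ x y z, tform a b c r s t x y z ≠ 6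

theorem good_shift_yz {N a b c r s t : ℤ} (j : ℤ) (h : Good N a b c r s t) :
    Good N a b (c + 2 * r * j + b * j ^ 2) (r + b * j) (s + t * j) t := by
  obtain ⟨h1, h2, h3, ⟨x, y, z, h4⟩, h5⟩ := h
  refine ⟨h1, h2, by linear_combination h3, ⟨x, y - j * z, z, ?_⟩, fun x y z h => h5 x (y + j * z) z ?_⟩
  · rw [← h4]; unfold tform; ring
  · rw [← h]; unfold tform; ring

theorem good_shift_xy {N a b c r s t : ℤ} (j : ℤ) (h : Good N a b c r s t) :
    Good N a (b + 2 * t * j + a * j ^ 2) c (r + s * j) s (t + a * j) := by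
  obtain ⟨h1, h2, h3, ⟨x, y, z, h4⟩, h5⟩ := h
  refine ⟨h1, by nlinarith, by linear_combination h3, ⟨x - j * y, y, z, ?_⟩,
    fun x y z h => h5 (x + j * y) y z ?_⟩
  · rw [← h4]; unfold tform; ring
  · rw [← h]; unfold tform; ring

theorem good_shift_xz {N a b c r s t : ℤ} (j : ℤ) (h : Good N a b c r s t) :
    Good N a b (c + 2 * s * j + a * j ^ 2) (r + t * j) (s + a * j) t := by
  obtain ⟨h1, h2, h3, ⟨x, y, z, h4⟩, h5⟩ := h
  refine ⟨h1, h2, by linear_combination h3, ⟨x - j * z, y, z, ?_⟩,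
    fun x y z h => h5 (x + j * z) y z ?_⟩
  · rw [← h4]; unfold tform; ring
  · rw [← h]; unfold tform; ring

theorem good_swap_xy {N a b c r s t : ℤ} (h : Good N a b c r s t) :
    Good N b a c s r t := by
  obtain ⟨h1, h2, h3, ⟨x, y, z, h4⟩, h5⟩ := h
  refine ⟨?_, by linarith, by linear_combination h3, ⟨y, x, z, ?_⟩, fun x y z h => h5 y x z ?_⟩
  · have : 0 < a * b := by nlinarith [sq_nonneg t]
    exact (pos_iff_pos_of_mul_pos this).1 h1
  · rw [← h4]; unfold tform; ring
  · rw [← h]; unfold tform; ring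

theorem good_minors {N a b c r s t : ℤ} (h : Good N a b c r s t) :
    (a * b - t ^ 2) * (a * c - s ^ 2) = 3 * a + (a * r - s * t) ^ 2 := by
  obtain ⟨h1, h2, h3, -, -⟩ := h
  linear_combination a * h3

theorem good_l_pos {N a b c r s t : ℤ} (h : Good N a b c r s t) :
    0 < a * c - s ^ 2 := by
  have h0 := good_minors h
  obtain ⟨h1, h2, h3, -, -⟩ := h
  have : 0 < (a * b - t ^ 2) * (a * c - s ^ 2) := by rw [h0]; positivity
  exact (pos_iff_pos_of_mul_pos this).1 h2

theorem good_swap_yz {N a b c r s t : ℤ} (h : Good N a b c r s t) :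
    Good N a c b r t s := by
  have hl := good_l_pos h
  obtain ⟨h1, h2, h3, ⟨x, y, z, h4⟩, h5⟩ := h
  refine ⟨h1, hl, by linear_combination h3, ⟨x, z, y, ?_⟩, fun x y z h => h5 x z y ?_⟩
  · rw [← h4]; unfold tform; ring
  · rw [← h]; unfold tform; ring

theorem exists_balanced (t a : ℤ) (ha : 0 < a) : ∃ j, |2 * (t + a * j)| ≤ a := by
  refine ⟨-((2 * t + a) / (2 * a)), ?_⟩
  have h1 := Int.emod_add_mul_ediv (2 * t + a) (2 * a)
  have h2 := Int.emod_nonneg (2 * t + a) (by omega : 2 * a ≠ 0)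
  have h3 := Int.emod_lt_of_pos (2 * t + a) (by omega : 0 < 2 * a)
  rw [abs_le]
  constructor <;> linarith

theorem good_balance {N a b c r s t : ℤ} (h : Good N a b c r s t) :
    ∃ b' c' r' s' t', Good N a b' c' r' s' t' ∧ a * b' - t' ^ 2 = a * b - t ^ 2 ∧
      |2 * t'| ≤ a ∧ |2 * s'| ≤ a ∧ |2 * (a * r' - s' * t')| ≤ a * b - t ^ 2 := by
  obtain ⟨j, hj⟩ := exists_balanced (a * r - s * t) (a * b - t ^ 2) h.2.1
  obtain ⟨i, hi⟩ := exists_balanced t a h.1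
  obtain ⟨k, hk⟩ := exists_balanced (s + t * j) a h.1
  refine ⟨_, _, _, _, _, good_shift_xz k (good_shift_xy i (good_shift_yz j h)), by ring, hi, hk, ?_⟩
  convert hj using 2
  ring

theorem good_reduced {N a b c r s t : ℤ} (h : Good N a b c r s t) (hab : a ≤ b)
    (hml : a * b - t ^ 2 ≤ a * c - s ^ 2) (ht : |2 * t| ≤ a) (hs : |2 * s| ≤ a)
    (hk : |2 * (a * r - s * t)| ≤ a * b - t ^ 2) :
    ∃ x y z : ℤ, x ^ 2 + y ^ 2 + 3 * z ^ 2 = N := by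
  have hmin := good_minors h
  obtain ⟨h1, h2, h3, ⟨x, y, z, h4⟩, h5⟩ := h
  have ht2 : (2 * t) ^ 2 ≤ a ^ 2 := sq_le_sq' (abs_le.1 ht).1 (abs_le.1 ht).2
  have hk2 : (2 * (a * r - s * t)) ^ 2 ≤ (a * b - t ^ 2) ^ 2 :=
    sq_le_sq' (abs_le.1 hk).1 (abs_le.1 hk).2
  set m := a * b - t ^ 2 with hm
  have hm2 : m ^ 2 ≤ 4 * a := by nlinarith
  have ham : 3 * a ^ 2 ≤ 4 * m := by nlinarith
  have ha1 : a = 1 := by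
    by_contra hne
    have ha2 : 2 ≤ a := by omega
    have e1 : (3 * a ^ 2) ^ 2 ≤ (4 * m) ^ 2 := by gcongr
    have e2 : a * (9 * a ^ 3) ≤ a * 64 := by nlinarith
    have e3 : 9 * a ^ 3 ≤ 64 := le_of_mul_le_mul_left e2 h1
    have e4 : (2 : ℤ) ^ 3 ≤ a ^ 3 := by gcongr
    omega
  subst ha1
  have t0 : t = 0 := by rw [abs_le] at ht; omega
  have s0 : s = 0 := by rw [abs_le] at hs; omega
  subst t0 s0
  have hmb : m = b := by rw [hm]; ring
  rw [hmb] at *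
  have hb2 : b ≤ 2 := by nlinarith
  rw [abs_le] at hk
  have hb : b = 1 ∨ b = 2 := by omega
  rcases hb with rfl | rfl
  · have r0 : r = 0 := by omega
    subst r0
    have c3 : c = 3 := by linarith
    subst c3
    exact ⟨x, y, z, by rw [← h4]; unfold tform; ring⟩
  · exact absurd (by unfold tform; ring) (h5 2 1 0)

theorem good_rep (N : ℤ) : ∀ A M : ℕ, ∀ a b c r s t : ℤ, a = A → a * b - t ^ 2 = M →
    Good N a b c r s t → ∃ x y z : ℤ, x ^ 2 + y ^ 2 + 3 * z ^ 2 = N := by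
  intro A
  induction A using Nat.strong_induction_on with
  | _ A ihA =>
  intro M
  induction M using Nat.strong_induction_on with
  | _ M ihM =>
  intro a b c r s t ha hm h
  obtain ⟨b, c, r, s, t, h', hm', ht, hs, hk⟩ := good_balance h
  rw [← hm'] at hk hm
  by_cases hab : a ≤ b
  · by_cases hml : a * b - t ^ 2 ≤ a * c - s ^ 2
    · exact good_reduced h' hab hml ht hs hk
    · have hl := good_l_pos h'
      exact ihM (a * c - s ^ 2).toNat (by omega) a c b r t s ha (by omega) (good_swap_yz h')
  · have g := good_swap_xy h'
    have hb := g.1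
    have hmm := g.2.1
    exact ihA b.toNat (by omega) (b * a - t ^ 2).toNat b a c s r t (by omega) (by omega) g

theorem jac (p b N : ℕ) (hb : b % 24 = 1) (hp : p % 4 = 1) (h : b * N = 2 * p + 3) :
    jacobiSym (-(b : ℤ)) p = 1 := by
  have hpo : Odd p := Nat.odd_iff.2 (by omega)
  have hbo : Odd b := Nat.odd_iff.2 (by omega)
  have e1 : jacobiSym (-(b : ℤ)) p = jacobiSym b p := by
    rw [jacobiSym.neg _ hpo, ZMod.χ₄_nat_one_mod_four hp, one_mul]
  have e2 : jacobiSym b p = jacobiSym p b :=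
    jacobiSym.quadratic_reciprocity_one_mod_four (by omega) hpo
  have e3 : jacobiSym 2 b = 1 := by
    rw [jacobiSym.at_two hbo, ZMod.χ₈_nat_eq_if_mod_eight]
    have : b % 8 = 1 := by omega
    have h2 : b % 2 = 1 := by omega
    simp [this, h2]
  have e4 : jacobiSym (2 * p : ℤ) b = jacobiSym (-3) b := by
    apply jacobiSym.mod_left'
    have : (2 * p : ℤ) = -3 + b * N := by
      have : (b * N : ℤ) = 2 * p + 3 := by exact_mod_cast h
      linarith
    rw [this, Int.add_mul_emod_self_left]
  have e5 : jacobiSym (-3) b = 1 := by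
    rw [jacobiSym.neg _ hbo, ZMod.χ₄_nat_one_mod_four (by omega), one_mul]
    have : jacobiSym (3 : ℕ) b = jacobiSym b 3 :=
      jacobiSym.quadratic_reciprocity_one_mod_four' (by decide) (by omega)
    rw [show (3 : ℤ) = ((3 : ℕ) : ℤ) by rfl, this, jacobiSym.mod_left,
      show (b : ℤ) % (3 : ℕ) = 1 by omega, jacobiSym.one_left]
  rw [e1, e2]
  rw [jacobiSym.mul_left, e3, one_mul] at e4
  rw [e4, e5]

theorem exists_prime_b (n : ℕ) : ∃ p b : ℕ, p.Prime ∧ b % 24 = 1 ∧ p % 12 = 5 ∧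
    b * (72 * n + 61) = 2 * p + 3 := by
  have hco : Nat.Coprime (36 * n + 29) (12 * (72 * n + 61)) := by
    have c1 : Nat.Coprime (36 * n + 29) 12 := by
      rw [show 36 * n + 29 = 5 + 12 * (3 * n + 2) by ring, Nat.coprime_add_mul_left_left]
      decide
    have c2 : Nat.Coprime (36 * n + 29) (72 * n + 61) := by
      rw [show 72 * n + 61 = 3 + 2 * (36 * n + 29) by ring, Nat.coprime_add_mul_right_right]
      rw [Nat.coprime_comm, Nat.Prime.coprime_iff_not_dvd Nat.prime_three]
      omega
    exact Nat.Coprime.mul_right c1 c2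
  have : NeZero (12 * (72 * n + 61)) := ⟨by omega⟩
  have hu : IsUnit ((36 * n + 29 : ℕ) : ZMod (12 * (72 * n + 61))) :=
    (ZMod.isUnit_iff_coprime _ _).2 hco
  obtain ⟨p, hgt, hp, he⟩ := Nat.forall_exists_prime_gt_and_eq_mod hu (36 * n + 29)
  rw [ZMod.natCast_eq_natCast_iff] at he
  obtain ⟨k, hk⟩ := (Nat.modEq_iff_dvd' hgt.le).1 he.symm
  have hpk : p = 36 * n + 29 + 12 * ((72 * n + 61) * k) := by
    rw [← mul_assoc, ← hk]; omega
  refine ⟨p, 1 + 24 * k, hp, by omega, by omega, ?_⟩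
  rw [hpk]; ring

theorem rep113 (n : ℕ) : ∃ x y z : ℤ, x ^ 2 + y ^ 2 + 3 * z ^ 2 = 72 * n + 61 := by
  obtain ⟨p, b, hp, hb, hp12, h⟩ := exists_prime_b n
  have : Fact p.Prime := ⟨hp⟩
  have hsq := ZMod.isSquare_of_jacobiSym_eq_one (jac p b _ hb (by omega) h)
  obtain ⟨w, hw⟩ := hsq
  obtain ⟨u, rfl⟩ := ZMod.intCast_surjective w
  have hdvd : (p : ℤ) ∣ u ^ 2 + b := by
    rw [← ZMod.intCast_zmod_eq_zero_iff_dvd] 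
    push_cast at hw ⊢
    linear_combination -hw
  -- choose an odd root
  obtain ⟨t, hto, ht⟩ : ∃ t : ℤ, t % 2 = 1 ∧ (p : ℤ) ∣ t ^ 2 + b := by
    rcases Int.emod_two_eq_zero_or_one u with h0 | h1
    · refine ⟨u + p, by omega, ?_⟩
      have : (u + p) ^ 2 + (b : ℤ) = u ^ 2 + b + p * (2 * u + p) := by ring
      rw [this]
      exact dvd_add hdvd (dvd_mul_right _ _)
    · exact ⟨u, h1, hdvd⟩
  have h2 : (2 : ℤ) ∣ t ^ 2 + b := by
    have : t ^ 2 % 2 = 1 := by rw [pow_two, Int.mul_emod, hto]; rfl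
    omega
  have h2p : (2 * p : ℤ) ∣ t ^ 2 + b := by
    apply IsCoprime.mul_dvd _ h2 ht
    rw [show (2 : ℤ) = ((2 : ℕ) : ℤ) by rfl, Nat.isCoprime_iff_coprime,
      Nat.Prime.coprime_iff_not_dvd Nat.prime_two]
    omega
  obtain ⟨d, hd⟩ := h2p
  have hz : (b : ℤ) * (72 * n + 61) = 2 * p + 3 := by exact_mod_cast h
  have hppos : (0 : ℤ) < p := by exact_mod_cast hp.pos
  have hbb : (2 * p : ℤ) * d - t ^ 2 = b := by linarith
  have good : Good (72 * n + 61) (2 * p) d (72 * n + 61) 1 0 t := by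
    refine ⟨by omega, by omega, ?_, ⟨0, 0, 1, by unfold tform; ring⟩, ?_⟩
    · linear_combination (72 * (n : ℤ) + 61) * hbb + hz
    · intro x y z h6
      have key : (2 * p : ℤ) * b * 6 = b * (2 * p * x + t * y) ^ 2 + (b * y + 2 * p * z) ^ 2
          + 3 * (2 * p) * z ^ 2 := by
        rw [← h6, show (2 * p : ℤ) = b * (72 * n + 61) - 3 by linarith] 
        rw [show (2 * p : ℤ) = b * (72 * n + 61) - 3 by linarith] at hbb
        unfold tform
        linear_combination (b * y ^ 2) * hbb
      obtain ⟨U, hU⟩ : ∃ U, U = 2 * p * x + t * y := ⟨_, rfl⟩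
      obtain ⟨V, hV⟩ : ∃ V, V = b * y + 2 * p * z := ⟨_, rfl⟩
      rw [← hU, ← hV] at key
      obtain ⟨β, hβ⟩ : ∃ β : ℤ, (b : ℤ) = 3 * β + 1 := ⟨b / 3, by omega⟩
      obtain ⟨α, hα⟩ : ∃ α : ℤ, (2 * p : ℤ) = 3 * α + 1 := ⟨2 * p / 3, by omega⟩
      rw [hβ, hα] at key
      have m3 : ∀ U : ℤ, ∃ q, U = 3 * q ∨ U = 3 * q + 1 ∨ U = 3 * q + 2 := fun U =>
        ⟨U / 3, by omega⟩
      obtain ⟨u, hu⟩ := m3 U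
      obtain ⟨v, hv⟩ := m3 V
      obtain ⟨w, hw⟩ := m3 z
      rcases hu with rfl | rfl | rfl <;> rcases hv with rfl | rfl | rfl <;>
        rcases hw with rfl | rfl | rfl <;> ring_nf at key <;> omega
  have g1 := good.1
  have g2 := good.2.1
  exact good_rep _ (2 * p) b _ _ _ _ _ _ (by push_cast; rfl) hbb good

/-- The rotation by a sixth root of unity, keeping everything odd. -/
theorem rot_odd (Z Y : ℤ) (hZ : Z % 2 = 1) (hY : Y % 2 = 1) (hZ3 : Z % 3 ≠ 0) (hY3 : Y % 3 = 0) :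
    ∃ Z' Y' : ℤ, Z' % 2 = 1 ∧ Y' % 2 = 1 ∧ Y' % 3 ≠ 0 ∧
      Z' ^ 2 + 3 * Y' ^ 2 = Z ^ 2 + 3 * Y ^ 2 := by
  obtain ⟨q, hq⟩ : ∃ q, Z = 2 * q + Y := ⟨(Z - Y) / 2, by omega⟩
  subst hq
  rcases Int.emod_two_eq_zero_or_one q with h | h
  · exact ⟨q - Y, q + Y, by omega, by omega, by omega, by ring⟩
  · exact ⟨q + 2 * Y, q, by omega, h, by omega, by ring⟩

theorem sq_mod8 (x : ℤ) : (x % 2 = 1 ∧ x ^ 2 % 8 = 1) ∨ (x % 4 = 0 ∧ x ^ 2 % 8 = 0) ∨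
    (x % 4 = 2 ∧ x ^ 2 % 8 = 4) := by
  have : x % 8 = 0 ∨ x % 8 = 1 ∨ x % 8 = 2 ∨ x % 8 = 3 ∨ x % 8 = 4 ∨ x % 8 = 5 ∨ x % 8 = 6 ∨
    x % 8 = 7 := by omega
  rcases this with h | h | h | h | h | h | h | h <;>
    (have h2 := Int.mul_emod x x 8; rw [h, ← pow_two] at h2; omega)

theorem sq_mod3 (x : ℤ) : (x % 3 = 0 ∧ x ^ 2 % 3 = 0) ∨ (x % 3 ≠ 0 ∧ x ^ 2 % 3 = 1) := by
  have : x % 3 = 0 ∨ x % 3 = 1 ∨ x % 3 = 2 := by omega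
  rcases this with h | h | h <;>
    (have h2 := Int.mul_emod x x 3; rw [h, ← pow_two] at h2; omega)

theorem sq_mod9 (x : ℤ) (h : x % 2 = 1) (h2 : x ^ 2 % 9 = 4) : x % 18 = 7 ∨ x % 18 = 11 := by
  have : x % 9 = 0 ∨ x % 9 = 1 ∨ x % 9 = 2 ∨ x % 9 = 3 ∨ x % 9 = 4 ∨ x % 9 = 5 ∨ x % 9 = 6 ∨
    x % 9 = 7 ∨ x % 9 = 8 := by omega
  rcases this with h' | h' | h' | h' | h' | h' | h' | h' | h' <;>
    (have h3 := Int.mul_emod x x 9; rw [h', ← pow_two] at h3; omega)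

theorem rot_even (c b : ℤ) (h : (c % 4 = 0 ∧ b % 4 = 2) ∨ (c % 4 = 2 ∧ b % 4 = 0)) :
    ∃ c' b' : ℤ, c' % 2 = 1 ∧ b' % 2 = 1 ∧ c' ^ 2 + 3 * b' ^ 2 = c ^ 2 + 3 * b ^ 2 := by
  obtain ⟨q, rfl⟩ : ∃ q, c = 2 * q := ⟨c / 2, by omega⟩
  obtain ⟨s, rfl⟩ : ∃ s, b = 2 * s := ⟨b / 2, by omega⟩
  exact ⟨q - 3 * s, q + s, by omega, by omega, by ring⟩

theorem rep_odd (n : ℕ) : ∃ x y z : ℤ, x % 2 = 1 ∧ y % 2 = 1 ∧ z % 2 = 1 ∧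
    x ^ 2 + y ^ 2 + 3 * z ^ 2 = 72 * n + 61 := by
  obtain ⟨x, y, z, h⟩ := rep113 n
  have hx := sq_mod8 x
  have hy := sq_mod8 y
  have hz := sq_mod8 z
  have cases : (x % 2 = 1 ∧ y % 2 = 1 ∧ z % 2 = 1) ∨
      (x % 2 = 1 ∧ ((y % 4 = 0 ∧ z % 4 = 2) ∨ (y % 4 = 2 ∧ z % 4 = 0))) ∨
      (y % 2 = 1 ∧ ((x % 4 = 0 ∧ z % 4 = 2) ∨ (x % 4 = 2 ∧ z % 4 = 0))) := by omega
  rcases cases with ⟨h1, h2, h3⟩ | ⟨h1, h2⟩ | ⟨h1, h2⟩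
  · exact ⟨x, y, z, h1, h2, h3, h⟩
  · obtain ⟨c, b, hc, hb, e⟩ := rot_even y z h2
    exact ⟨x, c, b, h1, hc, hb, by linarith⟩
  · obtain ⟨c, b, hc, hb, e⟩ := rot_even x z h2
    exact ⟨y, c, b, h1, hc, hb, by linarith⟩

theorem rep_mid (n : ℕ) : ∃ X Y Z : ℤ, X % 2 = 1 ∧ Y % 2 = 1 ∧ Z % 2 = 1 ∧ Z % 3 ≠ 0 ∧
    9 * X ^ 2 + 3 * Y ^ 2 + Z ^ 2 = 72 * n + 61 := by
  obtain ⟨x, y, z, h1, h2, h3, h⟩ := rep_odd n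
  have hx := sq_mod3 x
  have hy := sq_mod3 y
  have cases : (x % 3 = 0 ∧ y % 3 ≠ 0) ∨ (y % 3 = 0 ∧ x % 3 ≠ 0) := by omega
  rcases cases with ⟨a, b⟩ | ⟨a, b⟩
  · obtain ⟨q, rfl⟩ : ∃ q, x = 3 * q := ⟨x / 3, by omega⟩
    exact ⟨q, z, y, by omega, h3, h2, b, by linarith⟩
  · obtain ⟨q, rfl⟩ : ∃ q, y = 3 * q := ⟨y / 3, by omega⟩
    exact ⟨q, z, x, by omega, h3, h1, b, by linarith⟩

theorem rep_final (n : ℕ) : ∃ X Y Z : ℤ, X % 2 = 1 ∧ Y % 2 = 1 ∧ Z % 2 = 1 ∧ Y % 3 ≠ 0 ∧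
    9 * X ^ 2 + 3 * Y ^ 2 + Z ^ 2 = 72 * n + 61 := by
  obtain ⟨X, Y, Z, h1, h2, h3, h4, h⟩ := rep_mid n
  by_cases hY : Y % 3 = 0
  · obtain ⟨Z', Y', a, b, c, e⟩ := rot_odd Z Y h3 h2 h4 hY
    exact ⟨X, Y', Z', h1, b, a, c, by linarith⟩
  · exact ⟨X, Y, Z, h1, h2, h3, hY, h⟩

theorem two_p3 (x : ℤ) : 2 * p3 x = x ^ 2 + x := by
  unfold p3
  have h := sq_mod8 x
  omega

theorem two_p5 (x : ℤ) : 2 * p5 x = 3 * x ^ 2 - x := by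
  unfold p5
  have h := sq_mod8 x
  omega

theorem two_p11 (x : ℤ) : 2 * p11 x = 9 * x ^ 2 - 7 * x := by
  unfold p11
  have h := sq_mod8 x
  omega

theorem p3_add_p5_add_p11_universal (n : ℕ) :
    ∃ x y z : ℤ, (n : ℤ) = p3 x + p5 y + p11 z := by
  obtain ⟨X, Y, Z, h1, h2, h3, h4, h⟩ := rep_final n
  have hY3 := sq_mod3 Y
  have hZ := sq_mod9 Z h3 (by omega)
  obtain ⟨x, hx⟩ : ∃ x, X = 2 * x + 1 := ⟨X / 2, by omega⟩
  obtain ⟨y, hy⟩ : ∃ y, Y ^ 2 = (6 * y - 1) ^ 2 := by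
    have : Y % 6 = 1 ∨ Y % 6 = 5 := by omega
    rcases this with h | h
    · exact ⟨-(Y / 6), by rw [← neg_sq]; congr 1; omega⟩
    · exact ⟨Y / 6 + 1, by congr 1; omega⟩
  obtain ⟨z, hz⟩ : ∃ z, Z ^ 2 = (18 * z - 7) ^ 2 := by
    rcases hZ with h | h
    · exact ⟨-(Z / 18), by rw [← neg_sq]; congr 1; omega⟩
    · exact ⟨Z / 18 + 1, by congr 1; omega⟩
  refine ⟨x, y, z, ?_⟩
  have e1 := two_p3 x
  have e2 := two_p5 y
  have e3 := two_p11 z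
  rw [hx, hy, hz] at h
  linarith
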